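/- Let p₁₀, p₀₁ and p₄₀, p₃₁, p₂₂, p₁₃, p₀₄ be real numbers with p₁₀² + p₀₁² ≠ 0, and set P₁(θ) = p₁₀ cos θ + p₀₁ sin θ and P₄(θ) = Σ_{i+j=4} p_{ij} cosⁱθ sinʲθ. Then the equation dr/dθ = r(P₁(θ) r + P₄(θ) r⁴) has a center at r = 0 if and only if 3(p₄₀ + p₀₄) + p₂₂ = 0, (p₁₀² − p₀₁²)(p₀₄ − p₄₀) = p₁₀p₀₁(p₃₁ + p₁₃), and p₄₀p₀₁⁴ − p₃₁p₀₁³p₁₀ + p₂₂p₀₁²p₁₀² − p₁₃p₀₁p₁₀³ + p₀₄p₁₀⁴ = 0. -/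

import Mathlib

/-!
Write the equation as `r' = r (P r + R r ^ (n + 2))` with `Q' = P` and `Q` periodic. Along a
nonzero solution `u = 1 / r + Q` satisfies `u' = -R r ^ (n + 1)`, so a closed orbit gives
`∫ R (1 + Q r) ^ (n + 1) = 0`, by integrating the derivative of `u ^ (n + 2)`. For the solution
starting at `x`, where `Q` is normalised to vanish, `1 + Q r = (1 - Q x)⁻¹ + O(x ^ (n + 3))`; hence
at a center the Taylor coefficients of `∫ R (1 - Q x)⁻¹ ^ (n + 1)`, which are nonzero multiples of
the moments `∫ R Q ^ k`, vanish for `k ≤ n + 2`.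

For `P₁` and `P₄` one has `n = 2`, and `P² + Q²` is constant, so `P₄ = p(Q) + P g(Q)` with `p` a
polynomial of degree at most `4 = n + 2`. The term `P g(Q)` is orthogonal to all functions of `Q`
over a closed loop, so the moment conditions make `p(Q)` orthogonal to itself, i.e. `p = 0`.
Conversely, if `p = 0`, then every small solution is `y ∘ Q` with `y' = y² + g y ^ (n + 3)`, and is
therefore periodic.
-/

open Real

/-- A 2π-periodic scalar ODE `dr/dθ = F θ r` has a center at `r = 0` if every solution
with `|r 0|` sufficiently small is defined on `[0, 2π]` and satisfies `r (2π) = r 0`. -/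
def HasCenterAtZero (F : ℝ → ℝ → ℝ) : Prop :=
  ∃ ε > (0 : ℝ), ∀ r : ℝ → ℝ, |r 0| < ε →
    (∀ θ ∈ Set.Icc (0 : ℝ) (2 * Real.pi), HasDerivAt r (F θ (r θ)) θ) →
    r (2 * Real.pi) = r 0

open Set Filter Asymptotics Polynomial
open scoped Topology NNReal

/-! ### Asymptotic estimates -/

lemma isBigO_pow_sub_pow {α 𝕜 : Type*} [NormedField 𝕜] {l : Filter α} {f g : α → 𝕜}
    (hf : f =O[l] fun _ => (1 : 𝕜)) (hg : g =O[l] fun _ => (1 : 𝕜)) (m : ℕ) :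
    (fun x => f x ^ m - g x ^ m) =O[l] fun x => f x - g x := by
  have hsum : (fun x => ∑ i ∈ Finset.range m, f x ^ i * g x ^ (m - 1 - i)) =O[l]
      fun _ => (1 : 𝕜) :=
    .fun_sum fun i _ => ((hf.pow i).mul (hg.pow (m - 1 - i))).congr_right (by simp)
  simpa only [geom_sum₂_mul, one_mul] using hsum.mul (isBigO_refl (fun x => f x - g x) l)

lemma isBigO_sum_choose_sub_inv_one_sub_pow (m N : ℕ) :
    (fun z : ℝ => ∑ k ∈ Finset.range N, ((m + k).choose m : ℝ) * z ^ k - (1 - z)⁻¹ ^ (m + 1))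
      =O[𝓝 0] fun z => z ^ N := by
  have htaylor := ((Complex.one_div_one_sub_pow_hasFPowerSeriesOnBall_zero m).hasFPowerSeriesAt
    |>.isBigO_sub_partialSum_pow N).comp_tendsto
    (Complex.continuous_ofReal.tendsto' 0 0 Complex.ofReal_zero)
  rw [← isBigO_neg_left, ← Complex.isBigO_ofReal_left, ← isBigO_norm_right]
  refine htaylor.congr (fun z => ?_) (fun z => ?_)
  · simp [FormalMultilinearSeries.partialSum, mul_comm]
  · simp

lemma eq_zero_of_sum_isBigO {𝕜 : Type*} [NormedField 𝕜] {l : Filter 𝕜} [l.NeBot]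
    (hl : l ≤ 𝓝[≠] 0) {N : ℕ} {c : ℕ → 𝕜}
    (h : (fun x => ∑ k ∈ Finset.range N, c k * x ^ k) =O[l] fun x => x ^ N) :
    ∀ k < N, c k = 0 := by
  have hl0 : Tendsto id l (𝓝 (0 : 𝕜)) := hl.trans nhdsWithin_le_nhds
  induction N generalizing c with
  | zero => simp
  | succ N ih =>
    have hsplit : ∀ x : 𝕜, ∑ k ∈ Finset.range (N + 1), c k * x ^ k =
        (∑ k ∈ Finset.range N, c (k + 1) * x ^ k) * x + c 0 := fun x => by
      rw [Finset.sum_range_succ', Finset.sum_mul]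
      simp only [pow_succ, pow_zero, mul_one, mul_assoc]
    have hc0 : c 0 = 0 := by
      have hlim : Tendsto (fun x => ∑ k ∈ Finset.range (N + 1), c k * x ^ k) l (𝓝 (c 0)) := by
        refine Tendsto.mono_left ?_ hl0
        refine Continuous.tendsto' (by fun_prop) 0 _ ?_
        simp [hsplit]
      have hpow : Tendsto (fun x : 𝕜 => x ^ (N + 1)) l (𝓝 0) :=
        Tendsto.mono_left (Continuous.tendsto' (by fun_prop) 0 _ (by simp)) hl0
      exact tendsto_nhds_unique hlim (h.trans_tendsto hpow)
    have hshift : (fun x => ∑ k ∈ Finset.range N, c (k + 1) * x ^ k) =O[l] fun x => x ^ N := by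
      refine (h.mul (isBigO_refl (fun x => x⁻¹) l)).congr' ?_ ?_ <;>
        filter_upwards [hl self_mem_nhdsWithin] with x (hx : x ≠ 0)
      · simp [hsplit, hc0, hx]
      · simp [pow_succ, hx]
    rintro (_ | k) hk
    · exact hc0
    · exact ih hshift k (by omega)

lemma isBigO_intervalIntegral {α E F : Type*} [NormedAddCommGroup E] [NormedSpace ℝ E]
    [Norm F] {l : Filter α} {f : α → ℝ → E} {g : α → F} {c d : ℝ} (hcd : c ≤ d)
    (h : (fun p : α × ℝ => f p.1 p.2) =O[l ×ˢ 𝓟 (Icc c d)] fun p => g p.1) :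
    (fun x => ∫ t in c..d, f x t) =O[l] g := by
  obtain ⟨C, hC⟩ := h.bound
  rw [eventually_prod_principal_iff] at hC
  refine .of_bound (C * |d - c|) (hC.mono fun x hx => ?_)
  rw [mul_right_comm]
  refine intervalIntegral.norm_integral_le_of_norm_le_const fun t ht => hx t ?_
  exact uIoc_subset_uIcc.trans (uIcc_of_le hcd).subset ht

lemma isBigO_sub_of_hasDerivWithinAt {α E F : Type*} [NormedAddCommGroup E] [NormedSpace ℝ E]
    [SeminormedAddGroup F] {l : Filter α} {f f' : α → ℝ → E} {g : α → F} {c d : ℝ}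
    (hf : ∀ᶠ x in l, ∀ t ∈ Icc c d, HasDerivWithinAt (f x) (f' x t) (Icc c d) t)
    (h : (fun p : α × ℝ => f' p.1 p.2) =O[l ×ˢ 𝓟 (Icc c d)] fun p => g p.1) :
    (fun p : α × ℝ => f p.1 p.2 - f p.1 c) =O[l ×ˢ 𝓟 (Icc c d)] fun p => g p.1 := by
  obtain ⟨C, hC⟩ := h.bound
  rw [eventually_prod_principal_iff] at hC
  refine .of_bound (C * |d - c|) ?_
  rw [eventually_prod_principal_iff]
  filter_upwards [hf, hC] with x hfx hCx t ht
  have hcd : c ≤ d := ht.1.trans ht.2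
  have hmv := (convex_Icc c d).norm_image_sub_le_of_norm_hasDerivWithin_le hfx hCx
    (left_mem_Icc.2 hcd) ht
  have hbound : 0 ≤ C * ‖g x‖ := (norm_nonneg _).trans (hCx t ht)
  calc ‖f x t - f x c‖ ≤ C * ‖g x‖ * ‖t - c‖ := hmv
    _ ≤ C * ‖g x‖ * |d - c| := by
      gcongr
      rw [Real.norm_eq_abs, abs_of_nonneg (sub_nonneg.2 ht.1), abs_of_nonneg (sub_nonneg.2 hcd)]
      linarith [ht.2]
    _ = C * |d - c| * ‖g x‖ := by ring

/-! ### Generalised Abel equations -/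

lemma exists_solution_mem_closedBall {v : ℝ → ℝ → ℝ} {c d : ℝ} {t₀ : Icc c d}
    {x₀ x : ℝ} {a r L K : ℝ≥0} (hv : IsPicardLindelof v t₀ x₀ a r L K)
    (hx : x ∈ Metric.closedBall x₀ r) :
    ∃ α : ℝ → ℝ, α t₀ = x ∧ ∀ t ∈ Icc c d,
      α t ∈ Metric.closedBall x₀ a ∧ HasDerivWithinAt α (v t (α t)) (Icc c d) t := by
  have ha : x₀ - a ≤ x₀ + a := by linarith [a.coe_nonneg]
  -- Clipping extends the field to all of `ℝ`; the mean value inequality keeps the solution of the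
  -- clipped equation inside the ball, where the clipping has no effect.
  let clip : ℝ → ℝ := fun y => projIcc (x₀ - a) (x₀ + a) ha y
  have clip_mem : ∀ y, clip y ∈ Metric.closedBall x₀ a := fun y => by
    rw [Real.closedBall_eq_Icc]
    exact (projIcc _ _ ha y).2
  have clip_lipschitz : LipschitzWith 1 clip := LipschitzWith.projIcc ha
  have hclip : IsPicardLindelof (fun t y => v t (clip y)) t₀ x₀ a r L K :=
    { lipschitzOnWith := fun t ht => by
        simpa using! (hv.lipschitzOnWith t ht).comp clip_lipschitz.lipschitzOnWith
          fun y _ => clip_mem y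
      continuousOn := fun y _ => hv.continuousOn _ (clip_mem y)
      norm_le := fun t ht y _ => hv.norm_le t ht _ (clip_mem y)
      mul_max_le := hv.mul_max_le }
  obtain ⟨α, hα₀, hα⟩ := hclip.exists_eq_forall_mem_Icc_hasDerivWithinAt hx
  have α_mem : ∀ t ∈ Icc c d, α t ∈ Metric.closedBall x₀ a := fun t ht => by
    have hdist : dist (α t) x ≤ a - r := calc
      dist (α t) x ≤ L * ‖t - t₀‖ := by
        rw [← hα₀, dist_eq_norm]
        exact (convex_Icc c d).norm_image_sub_le_of_norm_hasDerivWithin_le hα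
          (fun s hs => hv.norm_le s hs _ (clip_mem _)) t₀.2 ht
      _ ≤ L * max (d - t₀) (t₀ - c) := by
        gcongr
        exact abs_sub_le_max_sub ht.1 ht.2 _
      _ ≤ a - r := hv.mul_max_le
    rw [Metric.mem_closedBall] at hx ⊢
    linarith [dist_triangle (α t) x x₀]
  refine ⟨α, hα₀, fun t ht => ⟨α_mem t ht, ?_⟩⟩
  have hclip_eq : clip (α t) = α t := by
    simp only [clip, projIcc_of_mem ha (Real.closedBall_eq_Icc ▸ α_mem t ht)]
  simpa only [hclip_eq] using hα t ht

/-- The right-hand side `x (a(t) x + b(t) x ^ (n + 2))` of a generalised Abel equation, the ordinary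
Abel equation being the case `n = 0`. Its exponent is shifted so that the second term always has
higher order in `x` than the first. -/
def abelField (a b : ℝ → ℝ) (n : ℕ) (t x : ℝ) : ℝ :=
  x * (a t * x + b t * x ^ (n + 2))

section

variable {a b : ℝ → ℝ} {n : ℕ}

lemma exists_lipschitzOnWith_abelField (ha : Continuous a) (hb : Continuous b) (n : ℕ) {s k : Set ℝ}
    (hs : IsCompact s) (hk : IsCompact k) :
    ∃ K, ∀ t ∈ s, LipschitzOnWith K (abelField a b n t) k := by
  have hpoly : ContDiff ℝ 1 fun p : (ℝ × ℝ) × ℝ => p.2 * (p.1.1 * p.2 + p.1.2 * p.2 ^ (n + 2)) := by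
    fun_prop
  obtain ⟨K, hK⟩ := hpoly.locallyLipschitz.locallyLipschitzOn.exists_lipschitzOnWith_of_compact
    (((hs.image ha).prod (hs.image hb)).prod hk)
  refine ⟨K, fun t ht => ?_⟩
  simpa using! hK.comp (LipschitzWith.prodMk_left (a t, b t)).lipschitzOnWith
    fun x hx => ⟨⟨mem_image_of_mem a ht, mem_image_of_mem b ht⟩, hx⟩

lemma abs_abelField_le {M : ℝ} {t x : ℝ} (ha : |a t| ≤ M) (hb : |b t| ≤ M) (hx : |x| ≤ 1) :
    |abelField a b n t x| ≤ 2 * M * x ^ 2 := by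
  have hM : 0 ≤ M := (abs_nonneg _).trans ha
  calc |abelField a b n t x| = |x| * |a t * x + b t * x ^ (n + 2)| := abs_mul _ _
    _ ≤ |x| * (|a t| * |x| + |b t| * |x| ^ (n + 2)) := by
      gcongr
      simpa only [abs_mul, abs_pow] using abs_add_le (a t * x) (b t * x ^ (n + 2))
    _ ≤ |x| * (M * |x| + M * |x|) := by
      gcongr
      exact pow_le_of_le_one (abs_nonneg x) hx (by omega)
    _ = 2 * M * x ^ 2 := by rw [← sq_abs x]; ring

lemma isPicardLindelof_abelField (ha : Continuous a) (hb : Continuous b) {c d M x : ℝ}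
    (t₀ : Icc c d) (haM : ∀ t ∈ Icc c d, |a t| ≤ M) (hbM : ∀ t ∈ Icc c d, |b t| ≤ M)
    (hx : |x| < 1 / 2) (hMx : 16 * M * (d - c) * |x| < 1) :
    ∃ K, IsPicardLindelof (abelField a b n) t₀ x ⟨|x| / 2, by positivity⟩ 0
      (8 * M * x ^ 2).toNNReal K := by
  have hM : 0 ≤ M := (abs_nonneg _).trans (haM t₀ t₀.2)
  have hL : ((8 * M * x ^ 2).toNNReal : ℝ) = 8 * M * x ^ 2 := coe_toNNReal _ (by positivity)
  obtain ⟨K, hK⟩ := exists_lipschitzOnWith_abelField ha hb n (isCompact_Icc (a := c) (b := d))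
    (isCompact_closedBall x (|x| / 2))
  refine ⟨K, hK, fun y _ => by unfold abelField; fun_prop, fun t ht y hy => ?_, ?_⟩
  · have hy' : |y| ≤ 2 * |x| := by
      have hdist : |y - x| ≤ |x| / 2 := hy
      linarith [abs_sub_abs_le_abs_sub y x, abs_nonneg x]
    have hsq : y ^ 2 ≤ 2 ^ 2 * x ^ 2 := by
      rw [← sq_abs y, ← sq_abs x, ← mul_pow]
      gcongr
    rw [hL]
    calc |abelField a b n t y| ≤ 2 * M * y ^ 2 :=
          abs_abelField_le (haM t ht) (hbM t ht) (by linarith)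
      _ ≤ 2 * M * (2 ^ 2 * x ^ 2) := by gcongr
      _ = 8 * M * x ^ 2 := by ring
  · have hmax : max (d - t₀) (t₀ - c : ℝ) ≤ d - c :=
      max_le (by linarith [t₀.2.1]) (by linarith [t₀.2.2])
    calc (8 * M * x ^ 2).toNNReal * max (d - t₀ : ℝ) (t₀ - c)
        ≤ 8 * M * x ^ 2 * (d - c) := by rw [hL]; gcongr
      _ = 16 * M * (d - c) * |x| * (|x| / 2) := by rw [← sq_abs x]; ring
      _ ≤ |x| / 2 := mul_le_of_le_one_left (by positivity) hMx.le
      _ = |x| / 2 - 0 := (sub_zero _).symm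

theorem eventually_exists_solution_abelField (ha : Continuous a) (hb : Continuous b) (n : ℕ)
    {c d t₀ : ℝ} (ht₀ : t₀ ∈ Icc c d) :
    ∀ᶠ x in 𝓝 0, ∃ r : ℝ → ℝ, r t₀ = x ∧ ∀ t ∈ Icc c d,
      |r t - x| ≤ |x| / 2 ∧ HasDerivAt r (abelField a b n t (r t)) t := by
  have hcompact : IsCompact (Icc (c - 1) (d + 1)) := isCompact_Icc
  obtain ⟨A, hA⟩ := hcompact.exists_bound_of_continuousOn ha.continuousOn
  obtain ⟨B, hB⟩ := hcompact.exists_bound_of_continuousOn hb.continuousOn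
  have hx_small : Tendsto (fun x : ℝ => |x|) (𝓝 0) (𝓝 0) :=
    Continuous.tendsto' (by fun_prop) 0 0 (by simp)
  have hMx_small : Tendsto (fun x : ℝ => 16 * max A B * (d + 1 - (c - 1)) * |x|) (𝓝 0) (𝓝 0) :=
    Continuous.tendsto' (by fun_prop) 0 0 (by simp)
  filter_upwards [hx_small.eventually_lt_const one_half_pos,
    hMx_small.eventually_lt_const one_pos] with x hx hMx
  obtain ⟨K, hK⟩ := isPicardLindelof_abelField (n := n) ha hb
    ⟨t₀, by linarith [ht₀.1], by linarith [ht₀.2]⟩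
    (fun t ht => (hA t ht).trans (le_max_left A B))
    (fun t ht => (hB t ht).trans (le_max_right A B)) hx hMx
  obtain ⟨r, hr₀, hr⟩ := exists_solution_mem_closedBall hK (Metric.mem_closedBall_self le_rfl)
  refine ⟨r, hr₀, fun t ht => ?_⟩
  obtain ⟨hrt, hrt'⟩ := hr t ⟨by linarith [ht.1], by linarith [ht.2]⟩
  exact ⟨hrt, hrt'.hasDerivAt (Icc_mem_nhds (by linarith [ht.1]) (by linarith [ht.2]))⟩

theorem eqOn_of_hasDerivAt_abelField (ha : Continuous a) (hb : Continuous b) {c d : ℝ}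
    {r₁ r₂ : ℝ → ℝ} (h₁ : ∀ t ∈ Icc c d, HasDerivAt r₁ (abelField a b n t (r₁ t)) t)
    (h₂ : ∀ t ∈ Icc c d, HasDerivAt r₂ (abelField a b n t (r₂ t)) t) (h : r₁ c = r₂ c) :
    EqOn r₁ r₂ (Icc c d) := by
  have hc₁ : ContinuousOn r₁ (Icc c d) := HasDerivAt.continuousOn h₁
  have hc₂ : ContinuousOn r₂ (Icc c d) := HasDerivAt.continuousOn h₂
  obtain ⟨K, hK⟩ := exists_lipschitzOnWith_abelField ha hb n isCompact_Icc
    ((isCompact_Icc.image_of_continuousOn hc₁).union (isCompact_Icc.image_of_continuousOn hc₂))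
  refine ODE_solution_unique_of_mem_Icc_right (fun t ht => hK t (Ico_subset_Icc_self ht))
    hc₁ (fun t ht => (h₁ t (Ico_subset_Icc_self ht)).hasDerivWithinAt)
    (fun t ht => .inl (mem_image_of_mem _ (Ico_subset_Icc_self ht)))
    hc₂ (fun t ht => (h₂ t (Ico_subset_Icc_self ht)).hasDerivWithinAt)
    (fun t ht => .inr (mem_image_of_mem _ (Ico_subset_Icc_self ht))) h

end

lemma continuous_of_hasDerivAt {𝕜 E : Type*} [NontriviallyNormedField 𝕜] [NormedAddCommGroup E]
    [NormedSpace 𝕜 E] {f f' : 𝕜 → E} (hf : ∀ x, HasDerivAt f (f' x) x) : Continuous f :=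
  continuous_iff_continuousAt.2 fun x => (hf x).continuousAt

theorem hasCenterAtZero_abelField_mul_comp {P Q g : ℝ → ℝ} (hP : Continuous P)
    (hg : Continuous g) (hQ : ∀ θ, HasDerivAt Q (P θ) θ) (hloop : Q (2 * π) = Q 0) (n : ℕ) :
    HasCenterAtZero (abelField P (fun θ => P θ * g (Q θ)) n) := by
  have hQc : Continuous Q := continuous_of_hasDerivAt hQ
  have hrange : IsCompact (Q '' Icc 0 (2 * π)) := isCompact_Icc.image hQc
  obtain ⟨c, d, hcd⟩ := bddBelow_bddAbove_iff_subset_Icc.1 ⟨hrange.bddBelow, hrange.bddAbove⟩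
  have hmem : ∀ θ ∈ Icc 0 (2 * π), Q θ ∈ Icc c d := fun θ hθ => hcd (mem_image_of_mem Q hθ)
  have h0 : (0 : ℝ) ∈ Icc 0 (2 * π) := left_mem_Icc.2 two_pi_pos.le
  obtain ⟨ε, hε, hsol⟩ := Metric.eventually_nhds_iff.1
    (eventually_exists_solution_abelField (a := fun _ => 1) continuous_const hg n (hmem 0 h0))
  refine ⟨ε, hε, fun r hr₀ hr => ?_⟩
  obtain ⟨y, hy₀, hy⟩ := hsol (y := r 0) (by simpa using hr₀)
  have hyQ : ∀ θ ∈ Icc 0 (2 * π), HasDerivAt (y ∘ Q)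
      (abelField P (fun θ => P θ * g (Q θ)) n θ ((y ∘ Q) θ)) θ := fun θ hθ =>
    ((hy (Q θ) (hmem θ hθ)).2.comp θ (hQ θ)).congr_deriv (by
      simp only [abelField, Function.comp_apply]; ring)
  have heq := eqOn_of_hasDerivAt_abelField hP (hP.mul (hg.comp hQc)) hr hyQ hy₀.symm
  calc r (2 * π) = y (Q (2 * π)) := heq (right_mem_Icc.2 two_pi_pos.le)
    _ = r 0 := by rw [hloop, hy₀]

/-! ### Vanishing moments -/

section

variable {P Q R : ℝ → ℝ} {n : ℕ} {c d : ℝ}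

lemma hasDerivAt_inv_add {r : ℝ → ℝ} {t : ℝ} (hr : HasDerivAt r (abelField P R n t (r t)) t)
    (hQ : HasDerivAt Q (P t) t) (hrt : r t ≠ 0) :
    HasDerivAt (fun s => (r s)⁻¹ + Q s) (-(R t * r t ^ (n + 1))) t := by
  refine ((hr.inv hrt).add hQ).congr_deriv ?_
  rw [abelField]
  field_simp
  ring

lemma integral_mul_one_add_mul_pow_eq_zero {r : ℝ → ℝ} (hcd : c ≤ d) (hR : Continuous R)
    (hQ : ∀ t, HasDerivAt Q (P t) t)
    (hr : ∀ t ∈ Icc c d, HasDerivAt r (abelField P R n t (r t)) t) (hr₀ : ∀ t ∈ Icc c d, r t ≠ 0)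
    (hrloop : r d = r c) (hQloop : Q d = Q c) :
    ∫ t in c..d, R t * (1 + Q t * r t) ^ (n + 1) = 0 := by
  rw [← uIcc_of_le hcd] at hr hr₀
  have hQc : Continuous Q := continuous_of_hasDerivAt hQ
  have hrc : ContinuousOn r (uIcc c d) := HasDerivAt.continuousOn hr
  have hderiv : ∀ t ∈ uIcc c d, HasDerivAt (fun s => -((r s)⁻¹ + Q s) ^ (n + 2) / (n + 2))
      (R t * (1 + Q t * r t) ^ (n + 1)) t := fun t ht => by
    refine (((hasDerivAt_inv_add (hr t ht) (hQ t) (hr₀ t ht)).pow (n + 2)).neg.div_const _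
      ).congr_deriv ?_
    have hu : (1 + Q t * r t) = ((r t)⁻¹ + Q t) * r t := by
      rw [add_mul, inv_mul_cancel₀ (hr₀ t ht)]
    rw [hu, mul_pow]
    push_cast
    field_simp
  rw [intervalIntegral.integral_eq_sub_of_hasDerivAt hderiv
    (ContinuousOn.intervalIntegrable (by fun_prop)), hrloop, hQloop, sub_self]

end

/-- For all small `x ≠ 0`, the function `r x` solves the Abel equation `r' = abelField P R n t r`
on `[c, d]` with initial value `x` at `c`, and stays within `|x| / 2` of it. -/
def IsSolutionFamily (P R : ℝ → ℝ) (n : ℕ) (c d : ℝ) (r : ℝ → ℝ → ℝ) : Prop :=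
  ∀ᶠ x in 𝓝[≠] 0, r x c = x ∧ ∀ t ∈ Icc c d,
    |r x t - x| ≤ |x| / 2 ∧ HasDerivAt (r x) (abelField P R n t (r x t)) t

lemma exists_isSolutionFamily {P R : ℝ → ℝ} (hP : Continuous P) (hR : Continuous R) (n : ℕ)
    {c d : ℝ} (hcd : c ≤ d) : ∃ r, IsSolutionFamily P R n c d r :=
  skolem.1 (nhdsWithin_le_nhds
    (eventually_exists_solution_abelField hP hR n (left_mem_Icc.2 hcd)))

lemma isBigO_snd_one {α X E : Type*} [TopologicalSpace X] [SeminormedAddGroup E] (l : Filter α)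
    {f : X → E} {K : Set X} (hK : IsCompact K) (hf : ContinuousOn f K) :
    (fun p : α × X => f p.2) =O[l ×ˢ 𝓟 K] fun _ => (1 : ℝ) :=
  (hf.isBigO_principal hK (c := (1 : ℝ)) (by simp)).comp_snd l

lemma tendsto_snd_mul_fst {f : ℝ → ℝ} {K : Set ℝ} (hK : IsCompact K) (hf : ContinuousOn f K) :
    Tendsto (fun p : ℝ × ℝ => f p.2 * p.1) (𝓝[≠] 0 ×ˢ 𝓟 K) (𝓝 0) := by
  have hfst : Tendsto (fun p : ℝ × ℝ => p.1) (𝓝[≠] 0 ×ˢ 𝓟 K) (𝓝 0) :=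
    tendsto_fst.mono_right nhdsWithin_le_nhds
  refine (((isBigO_snd_one (𝓝[≠] 0) hK hf).mul (isBigO_refl (fun p : ℝ × ℝ => p.1) _)).congr_right
    fun p => one_mul _).trans_tendsto hfst

lemma isBigO_inv_one_sub {f : ℝ → ℝ} {K : Set ℝ} (hK : IsCompact K) (hf : ContinuousOn f K) :
    (fun p : ℝ × ℝ => (1 - f p.2 * p.1)⁻¹) =O[𝓝[≠] 0 ×ˢ 𝓟 K] fun _ => (1 : ℝ) :=
  (((tendsto_snd_mul_fst hK hf).const_sub 1).inv₀ (by simp)).isBigO_one ℝ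

namespace IsSolutionFamily

variable {P Q R : ℝ → ℝ} {n : ℕ} {c d : ℝ} {r : ℝ → ℝ → ℝ}

lemma eventually_ne_zero (hr : IsSolutionFamily P R n c d r) :
    ∀ᶠ x in 𝓝[≠] 0, ∀ t ∈ Icc c d, r x t ≠ 0 := by
  filter_upwards [hr, self_mem_nhdsWithin] with x hx (hx₀ : x ≠ 0) t ht hrt
  have hdist := (hx.2 t ht).1
  rw [hrt, zero_sub, abs_neg] at hdist
  linarith [abs_pos.2 hx₀]

lemma eventually_ne_zero_prod (hr : IsSolutionFamily P R n c d r) :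
    ∀ᶠ p : ℝ × ℝ in 𝓝[≠] 0 ×ˢ 𝓟 (Icc c d), r p.1 p.2 ≠ 0 :=
  eventually_prod_principal_iff.2 hr.eventually_ne_zero

lemma isBigO_fst (hr : IsSolutionFamily P R n c d r) :
    (fun p : ℝ × ℝ => r p.1 p.2) =O[𝓝[≠] 0 ×ˢ 𝓟 (Icc c d)] fun p => p.1 := by
  refine .of_bound (3 / 2) (eventually_prod_principal_iff.2 (hr.mono fun x hx t ht => ?_))
  rw [norm_eq_abs, norm_eq_abs]
  linarith [abs_sub_abs_le_abs_sub (r x t) x, (hx.2 t ht).1]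

lemma isBigO_inv_add_sub_inv (hr : IsSolutionFamily P R n c d r) (hR : Continuous R)
    (hQ : ∀ t, HasDerivAt Q (P t) t) (hQc : Q c = 0) :
    (fun p : ℝ × ℝ => (r p.1 p.2)⁻¹ + Q p.2 - p.1⁻¹) =O[𝓝[≠] 0 ×ˢ 𝓟 (Icc c d)]
      fun p => p.1 ^ (n + 1) := by
  have hderiv : ∀ᶠ x in 𝓝[≠] 0, ∀ t ∈ Icc c d, HasDerivWithinAt (fun s => (r x s)⁻¹ + Q s)
      (-(R t * r x t ^ (n + 1))) (Icc c d) t := by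
    filter_upwards [hr, hr.eventually_ne_zero] with x hx hx₀ t ht
    exact (hasDerivAt_inv_add (hx.2 t ht).2 (hQ t) (hx₀ t ht)).hasDerivWithinAt
  have hbound : (fun p : ℝ × ℝ => -(R p.2 * r p.1 p.2 ^ (n + 1)))
      =O[𝓝[≠] 0 ×ˢ 𝓟 (Icc c d)] fun p => p.1 ^ (n + 1) := by
    simpa only [one_mul] using
      ((isBigO_snd_one _ isCompact_Icc hR.continuousOn).mul (hr.isBigO_fst.pow (n + 1))).neg_left
  refine (isBigO_sub_of_hasDerivWithinAt (g := fun x => x ^ (n + 1)) hderiv hbound).congr' ?_ .rfl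
  refine eventually_prod_principal_iff.2 (hr.mono fun x hx t _ => ?_)
  simp only [hx.1, hQc, add_zero]

lemma isBigO_one_add_mul_sub_inv (hr : IsSolutionFamily P R n c d r) (hR : Continuous R)
    (hQ : ∀ t, HasDerivAt Q (P t) t) (hQc : Q c = 0) :
    (fun p : ℝ × ℝ => 1 + Q p.2 * r p.1 p.2 - (1 - Q p.2 * p.1)⁻¹)
      =O[𝓝[≠] 0 ×ˢ 𝓟 (Icc c d)] fun p => p.1 ^ (n + 3) := by
  have hQcont : Continuous Q := continuous_of_hasDerivAt hQ
  have hQx := tendsto_snd_mul_fst (isCompact_Icc (a := c) (b := d)) hQcont.continuousOn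
  have hbound := (((isBigO_snd_one _ isCompact_Icc hQcont.continuousOn).mul (hr.isBigO_fst.mul
    ((isBigO_refl (fun p : ℝ × ℝ => p.1) _).mul (hr.isBigO_inv_add_sub_inv hR hQ hQc)))).mul
    (isBigO_inv_one_sub isCompact_Icc hQcont.continuousOn)).neg_left
  -- With `δ = r⁻¹ + Q - x⁻¹`, the difference is exactly `-(Q * (r * (x * δ)) * (1 - Q x)⁻¹)`.
  refine hbound.congr' ?_ (.of_forall fun p => by ring)
  filter_upwards [hr.eventually_ne_zero_prod,
    tendsto_fst.eventually (self_mem_nhdsWithin (s := {0}ᶜ)),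
    hQx.eventually_ne one_ne_zero.symm] with p hrp (hxp : p.1 ≠ 0) hQp
  have hden : 1 - Q p.2 * p.1 ≠ 0 := sub_ne_zero.2 hQp.symm
  field_simp
  ring

lemma isBigO_sum_choose_sub_one_add_mul_pow (hr : IsSolutionFamily P R n c d r)
    (hR : Continuous R) (hQ : ∀ t, HasDerivAt Q (P t) t) (hQc : Q c = 0) :
    (fun p : ℝ × ℝ => ∑ k ∈ Finset.range (n + 3), ((n + k).choose n : ℝ) * (Q p.2 * p.1) ^ k -
      (1 + Q p.2 * r p.1 p.2) ^ (n + 1)) =O[𝓝[≠] 0 ×ˢ 𝓟 (Icc c d)] fun p => p.1 ^ (n + 3) := by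
  have hQcont : Continuous Q := continuous_of_hasDerivAt hQ
  have hinv := isBigO_inv_one_sub (isCompact_Icc (a := c) (b := d)) hQcont.continuousOn
  have hsub := hr.isBigO_one_add_mul_sub_inv hR hQ hQc
  have hpow : (fun p : ℝ × ℝ => p.1 ^ (n + 3)) =O[𝓝[≠] 0 ×ˢ 𝓟 (Icc c d)] fun _ => (1 : ℝ) :=
    ((tendsto_fst.mono_right nhdsWithin_le_nhds).pow (n + 3)).isBigO_one ℝ
  have hone : (fun p : ℝ × ℝ => 1 + Q p.2 * r p.1 p.2) =O[𝓝[≠] 0 ×ˢ 𝓟 (Icc c d)]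
      fun _ => (1 : ℝ) := by
    simpa only [sub_add_cancel] using (hsub.trans hpow).add hinv
  have htaylor : (fun p : ℝ × ℝ => ∑ k ∈ Finset.range (n + 3),
      ((n + k).choose n : ℝ) * (Q p.2 * p.1) ^ k - (1 - Q p.2 * p.1)⁻¹ ^ (n + 1))
      =O[𝓝[≠] 0 ×ˢ 𝓟 (Icc c d)] fun p => p.1 ^ (n + 3) := by
    refine ((isBigO_sum_choose_sub_inv_one_sub_pow n (n + 3)).comp_tendsto
      (tendsto_snd_mul_fst isCompact_Icc hQcont.continuousOn)).trans ?_
    simpa only [one_mul] using! ((isBigO_snd_one _ isCompact_Icc hQcont.continuousOn).mul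
      (isBigO_refl (fun p : ℝ × ℝ => p.1) _)).pow (n + 3)
  simpa only [sub_sub_sub_cancel_right] using
    htaylor.sub ((isBigO_pow_sub_pow hone hinv (n + 1)).trans hsub)

theorem integral_mul_pow_eq_zero (hr : IsSolutionFamily P R n c d r) (hcd : c ≤ d)
    (hR : Continuous R) (hQ : ∀ t, HasDerivAt Q (P t) t) (hQc : Q c = 0) (hQd : Q d = 0)
    (hloop : ∀ᶠ x in 𝓝[≠] 0, r x d = r x c) :
    ∀ k < n + 3, ∫ t in c..d, R t * Q t ^ k = 0 := by
  have hQcont : Continuous Q := continuous_of_hasDerivAt hQ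
  have hexpand : ∀ᶠ x in 𝓝[≠] (0 : ℝ), ∫ t in c..d, R t *
      (∑ k ∈ Finset.range (n + 3), ((n + k).choose n : ℝ) * (Q t * x) ^ k -
        (1 + Q t * r x t) ^ (n + 1)) =
      ∑ k ∈ Finset.range (n + 3), (n + k).choose n * (∫ t in c..d, R t * Q t ^ k) * x ^ k := by
    filter_upwards [hr, hr.eventually_ne_zero, hloop] with x hx hx₀ hxloop
    have hrc : ContinuousOn (r x) (uIcc c d) := by
      rw [uIcc_of_le hcd]
      exact HasDerivAt.continuousOn fun t ht => (hx.2 t ht).2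
    simp only [mul_sub]
    rw [intervalIntegral.integral_sub (Continuous.intervalIntegrable (by fun_prop) _ _)
      (ContinuousOn.intervalIntegrable (by fun_prop)),
      integral_mul_one_add_mul_pow_eq_zero hcd hR hQ (fun t ht => (hx.2 t ht).2) hx₀ hxloop
        (hQd.trans hQc.symm), sub_zero]
    simp only [Finset.mul_sum]
    rw [intervalIntegral.integral_finsetSum
      fun k _ => Continuous.intervalIntegrable (by fun_prop) _ _]
    refine Finset.sum_congr rfl fun k _ => ?_
    rw [mul_assoc, mul_comm (∫ t in c..d, R t * Q t ^ k), ← intervalIntegral.integral_const_mul,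
      ← intervalIntegral.integral_const_mul]
    congr with t
    ring
  have hbound := (isBigO_snd_one (𝓝[≠] (0 : ℝ)) (isCompact_Icc (a := c) (b := d))
    hR.continuousOn).mul (hr.isBigO_sum_choose_sub_one_add_mul_pow hR hQ hQc)
  simp only [one_mul] at hbound
  have hmoment := (isBigO_intervalIntegral (g := fun x => x ^ (n + 3)) hcd hbound).congr' hexpand
    .rfl
  intro k hk
  simpa [Nat.choose_eq_zero_iff] using eq_zero_of_sum_isBigO le_rfl hmoment k hk

end IsSolutionFamily

theorem integral_mul_eval_eq_zero_of_hasCenterAtZero {P Q R : ℝ → ℝ} (hP : Continuous P)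
    (hR : Continuous R) (hQ : ∀ θ, HasDerivAt Q (P θ) θ) (hloop : Q (2 * π) = Q 0) {n : ℕ}
    (hcenter : HasCenterAtZero (abelField P R n)) {p : ℝ[X]} (hp : p.natDegree < n + 3) :
    ∫ θ in 0..2 * π, R θ * p.eval (Q θ) = 0 := by
  have hQc : Continuous Q := continuous_of_hasDerivAt hQ
  obtain ⟨r, hr⟩ := exists_isSolutionFamily hP hR n two_pi_pos.le
  obtain ⟨ε, hε, hreturn⟩ := hcenter
  have hrloop : ∀ᶠ x in 𝓝[≠] 0, r x (2 * π) = r x 0 := by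
    filter_upwards [hr, nhdsWithin_le_nhds (Metric.ball_mem_nhds 0 hε)] with x hx hxε
    exact hreturn (r x) (by simpa [hx.1] using hxε) fun θ hθ => (hx.2 θ hθ).2
  have hmoment := hr.integral_mul_pow_eq_zero (Q := fun θ => Q θ - Q 0) two_pi_pos.le hR
    (fun θ => (hQ θ).sub_const _) (sub_self _) (sub_eq_zero.2 hloop) hrloop
  set q := p.comp (X + C (Q 0)) with hq
  have hqdeg : q.natDegree < n + 3 := by simpa [hq, natDegree_comp] using hp
  have heval : ∀ θ, p.eval (Q θ) = ∑ k ∈ Finset.range (n + 3), q.coeff k * (Q θ - Q 0) ^ k :=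
    fun θ => by rw [← eval_eq_sum_range' hqdeg]; simp [hq]
  simp only [heval, Finset.mul_sum]
  rw [intervalIntegral.integral_finsetSum
    fun k _ => Continuous.intervalIntegrable (by fun_prop) _ _]
  refine Finset.sum_eq_zero fun k hk => ?_
  simp only [mul_left_comm (R _)]
  rw [intervalIntegral.integral_const_mul, hmoment k (Finset.mem_range.1 hk), mul_zero]

theorem hasCenterAtZero_abelField_iff {P Q g : ℝ → ℝ} (hP : Continuous P) (hg : Continuous g)
    (hQ : ∀ θ, HasDerivAt Q (P θ) θ) (hloop : Q (2 * π) = Q 0)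
    (hnonconst : (Q '' Icc 0 (2 * π)).Nontrivial) {n : ℕ} {p : ℝ[X]} (hp : p.natDegree < n + 3) :
    HasCenterAtZero (abelField P (fun θ => p.eval (Q θ) + P θ * g (Q θ)) n) ↔ p = 0 := by
  refine ⟨fun hcenter => ?_, fun hp₀ => ?_⟩
  · have hQc : Continuous Q := continuous_of_hasDerivAt hQ
    have horth := integral_mul_eval_eq_zero_of_hasCenterAtZero hP (by fun_prop) hQ hloop hcenter hp
    have hodd : ∫ θ in 0..2 * π, g (Q θ) * p.eval (Q θ) * P θ = 0 := by
      have hsubst := intervalIntegral.integral_comp_mul_deriv (a := 0) (b := 2 * π)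
        (g := fun y => g y * p.eval y) (fun θ _ => hQ θ) hP.continuousOn (by fun_prop)
      simpa [hloop] using hsubst
    have hsq : ∫ θ in 0..2 * π, p.eval (Q θ) ^ 2 = 0 := calc
      _ = ∫ θ in 0..2 * π, ((p.eval (Q θ) + P θ * g (Q θ)) * p.eval (Q θ) -
          g (Q θ) * p.eval (Q θ) * P θ) := by congr with θ; ring
      _ = _ := intervalIntegral.integral_sub (Continuous.intervalIntegrable (by fun_prop) _ _)
          (Continuous.intervalIntegrable (by fun_prop) _ _)
      _ = 0 := by rw [horth, hodd, sub_zero]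
    have hroot : ∀ θ ∈ Icc 0 (2 * π), p.eval (Q θ) = 0 := fun θ hθ => by
      by_contra hne
      exact (intervalIntegral.integral_pos two_pi_pos (by fun_prop) (fun _ _ => sq_nonneg _)
        ⟨θ, hθ, by positivity⟩).ne' hsq
    have hinfinite : (Q '' Icc 0 (2 * π)).Infinite :=
      (isPreconnected_Icc.image Q hQc.continuousOn).infinite_of_nontrivial hnonconst
    refine eq_zero_of_infinite_isRoot p (hinfinite.mono ?_)
    rintro _ ⟨θ, hθ, rfl⟩
    exact hroot θ hθ
  · simpa [hp₀] using hasCenterAtZero_abelField_mul_comp hP hg hQ hloop n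

/-! ### Trigonometric forms -/

/-- The restriction `θ ↦ a cos θ + b sin θ` of the linear form `a x + b y` to the unit circle. -/
noncomputable def trigLinear (a b θ : ℝ) : ℝ := a * cos θ + b * sin θ

lemma hasDerivAt_trigLinear (a b θ : ℝ) :
    HasDerivAt (trigLinear a b) (trigLinear b (-a) θ) θ :=
  (((hasDerivAt_cos θ).const_mul a).add ((hasDerivAt_sin θ).const_mul b)).congr_deriv (by
    rw [trigLinear]; ring)

lemma continuous_trigLinear (a b : ℝ) : Continuous (trigLinear a b) :=
  continuous_of_hasDerivAt (hasDerivAt_trigLinear a b)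

lemma trigLinear_two_pi (a b : ℝ) : trigLinear a b (2 * π) = trigLinear a b 0 := by
  simp [trigLinear]

lemma trigLinear_sq_add_trigLinear_sq (a b θ : ℝ) :
    trigLinear a b θ ^ 2 + trigLinear (-b) a θ ^ 2 = a ^ 2 + b ^ 2 := by
  simp only [trigLinear]
  linear_combination (a ^ 2 + b ^ 2) * sin_sq_add_cos_sq θ

lemma nontrivial_trigLinear_image {a b : ℝ} (h : a ≠ 0 ∨ b ≠ 0) :
    (trigLinear a b '' Icc 0 (2 * π)).Nontrivial := by
  have hmem : ∀ θ, 0 ≤ θ → θ ≤ π → trigLinear a b θ ∈ trigLinear a b '' Icc 0 (2 * π) :=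
    fun θ h₀ h₁ => mem_image_of_mem _ ⟨h₀, by linarith [pi_pos]⟩
  rcases eq_or_ne a 0 with ha | ha
  · refine ⟨_, hmem 0 le_rfl pi_nonneg, _, hmem (π / 2) (by positivity) (by linarith [pi_pos]), ?_⟩
    simpa [trigLinear, ha, eq_comm] using h
  · refine ⟨_, hmem 0 le_rfl pi_nonneg, _, hmem π pi_nonneg le_rfl, ?_⟩
    simpa [trigLinear, self_eq_neg] using ha

/-- The polynomial in `Q` that agrees with the even quartic form `a P⁴ + b P² Q² + c Q⁴` on the
circle `P² + Q² = N`. -/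
noncomputable def evenQuartic (N a b c : ℝ) : ℝ[X] :=
  C a * (C N - X ^ 2) ^ 2 + C b * ((C N - X ^ 2) * X ^ 2) + C c * X ^ 4

lemma natDegree_evenQuartic_le (N a b c : ℝ) : (evenQuartic N a b c).natDegree ≤ 4 := by
  unfold evenQuartic
  compute_degree

lemma eval_evenQuartic (N a b c x : ℝ) : (evenQuartic N a b c).eval x =
    a * (N - x ^ 2) ^ 2 + b * ((N - x ^ 2) * x ^ 2) + c * x ^ 4 := by
  simp [evenQuartic]

lemma evenQuartic_eq_zero_iff {N a b c : ℝ} (hN : 0 < N) :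
    evenQuartic N a b c = 0 ↔ a = 0 ∧ b = 0 ∧ c = 0 := by
  refine ⟨fun h => ?_, ?_⟩
  · have heval : ∀ s, 0 ≤ s → a * (N - s) ^ 2 + b * ((N - s) * s) + c * s ^ 2 = 0 := fun s hs => by
      have hx := congrArg (eval √s) h
      rw [eval_evenQuartic, show √s ^ 4 = (√s ^ 2) ^ 2 by ring, sq_sqrt hs, eval_zero] at hx
      exact hx
    have ha : a = 0 := by simpa [hN.ne'] using heval 0 le_rfl
    have hc : c = 0 := by simpa [hN.ne'] using heval N hN.le
    have hb : b = 0 := by simpa [ha, hc, hN.ne', sub_half] using heval (N / 2) (by positivity)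
    exact ⟨ha, hb, hc⟩
  · rintro ⟨rfl, rfl, rfl⟩
    simp [evenQuartic]

theorem hasCenterAtZero_abelField_trigLinear_iff {p₁₀ p₀₁ : ℝ} (hp : p₁₀ ^ 2 + p₀₁ ^ 2 ≠ 0)
    {P Q : ℝ → ℝ} (hP : P = trigLinear p₁₀ p₀₁) (hQ : Q = trigLinear (-p₀₁) p₁₀) (a b c u v : ℝ) :
    HasCenterAtZero (abelField P (fun θ => a * P θ ^ 4 + b * (P θ ^ 2 * Q θ ^ 2) + c * Q θ ^ 4 +
      P θ * (Q θ * (u * P θ ^ 2 + v * Q θ ^ 2))) 2) ↔ a = 0 ∧ b = 0 ∧ c = 0 := by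
  subst hP hQ
  set N := p₁₀ ^ 2 + p₀₁ ^ 2 with hN
  have hN_pos : 0 < N := lt_of_le_of_ne (by positivity) hp.symm
  have hnonzero : -p₀₁ ≠ 0 ∨ p₁₀ ≠ 0 := by
    contrapose! hp
    simp [hN, hp.2, neg_eq_zero.1 hp.1]
  have hQderiv : ∀ θ, HasDerivAt (trigLinear (-p₀₁) p₁₀) (trigLinear p₁₀ p₀₁ θ) θ := by
    simpa using hasDerivAt_trigLinear (-p₀₁) p₁₀
  rw [← evenQuartic_eq_zero_iff hN_pos, ← hasCenterAtZero_abelField_iff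
    (g := fun x => x * (u * (N - x ^ 2) + v * x ^ 2)) (continuous_trigLinear _ _) (by fun_prop)
    hQderiv (trigLinear_two_pi _ _) (nontrivial_trigLinear_image hnonzero) (n := 2)
    (Nat.lt_succ_of_le (natDegree_evenQuartic_le N a b c))]
  have hPsq : ∀ θ, N - trigLinear (-p₀₁) p₁₀ θ ^ 2 = trigLinear p₁₀ p₀₁ θ ^ 2 := fun θ =>
    sub_eq_of_eq_add (trigLinear_sq_add_trigLinear_sq p₁₀ p₀₁ θ).symm
  simp only [eval_evenQuartic, hPsq, ← pow_mul]

lemma exists_quartic_eq_even_add_odd {K : Type*} [Field K] {p₁₀ p₀₁ : K}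
    (hp : p₁₀ ^ 2 + p₀₁ ^ 2 ≠ 0) (p₄₀ p₃₁ p₂₂ p₁₃ p₀₄ : K) {N κ₁ κ₂ κ₃ : K}
    (hN : N = p₁₀ ^ 2 + p₀₁ ^ 2)
    (hκ₁ : κ₁ = 3 * (p₄₀ + p₀₄) + p₂₂)
    (hκ₂ : κ₂ = (p₁₀ ^ 2 - p₀₁ ^ 2) * (p₀₄ - p₄₀) - p₁₀ * p₀₁ * (p₃₁ + p₁₃))
    (hκ₃ : κ₃ = p₄₀ * p₀₁ ^ 4 - p₃₁ * p₀₁ ^ 3 * p₁₀ + p₂₂ * p₀₁ ^ 2 * p₁₀ ^ 2 -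
      p₁₃ * p₀₁ * p₁₀ ^ 3 + p₀₄ * p₁₀ ^ 4) :
    ∃ u v : K, ∀ x y P Q : K, P = p₁₀ * x + p₀₁ * y → Q = -p₀₁ * x + p₁₀ * y →
      p₄₀ * x ^ 4 + p₃₁ * x ^ 3 * y + p₂₂ * x ^ 2 * y ^ 2 + p₁₃ * x * y ^ 3 + p₀₄ * y ^ 4 =
        (κ₃ - N * κ₂) / N ^ 4 * P ^ 4 +
        (N ^ 2 * κ₁ - 6 * κ₃ + 3 * N * κ₂) / N ^ 4 * (P ^ 2 * Q ^ 2) + κ₃ / N ^ 4 * Q ^ 4 +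
        P * (Q * (u * P ^ 2 + v * Q ^ 2)) := by
  -- The coefficients of `P³ Q` and `P Q³` after solving for `x` and `y` in terms of `P` and `Q`.
  refine ⟨(p₄₀ * (-4 * p₁₀ ^ 3 * p₀₁) + p₃₁ * (p₁₀ ^ 4 - 3 * p₁₀ ^ 2 * p₀₁ ^ 2) +
      p₂₂ * (2 * p₁₀ ^ 3 * p₀₁ - 2 * p₁₀ * p₀₁ ^ 3) + p₁₃ * (3 * p₁₀ ^ 2 * p₀₁ ^ 2 - p₀₁ ^ 4) +
      p₀₄ * (4 * p₁₀ * p₀₁ ^ 3)) / N ^ 4,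
    (p₄₀ * (-4 * p₁₀ * p₀₁ ^ 3) + p₃₁ * (3 * p₁₀ ^ 2 * p₀₁ ^ 2 - p₀₁ ^ 4) +
      p₂₂ * (2 * p₁₀ * p₀₁ ^ 3 - 2 * p₁₀ ^ 3 * p₀₁) + p₁₃ * (p₁₀ ^ 4 - 3 * p₁₀ ^ 2 * p₀₁ ^ 2) +
      p₀₄ * (4 * p₁₀ ^ 3 * p₀₁)) / N ^ 4, fun x y P Q hP hQ => ?_⟩
  have hx : x = (p₁₀ * P - p₀₁ * Q) / N := by
    rw [eq_div_iff (hN ▸ hp), hN, hP, hQ]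
    ring
  have hy : y = (p₀₁ * P + p₁₀ * Q) / N := by
    rw [eq_div_iff (hN ▸ hp), hN, hP, hQ]
    ring
  rw [hx, hy, hκ₁, hκ₂, hκ₃]
  have hN₀ : N ≠ 0 := hN ▸ hp
  field_simp
  rw [hN]
  ring

lemma even_coeffs_eq_zero_iff {K : Type*} [Field K] {N κ₁ κ₂ κ₃ : K} (hN : N ≠ 0) :
    ((κ₃ - N * κ₂) / N ^ 4 = 0 ∧ (N ^ 2 * κ₁ - 6 * κ₃ + 3 * N * κ₂) / N ^ 4 = 0 ∧
      κ₃ / N ^ 4 = 0) ↔ κ₁ = 0 ∧ κ₂ = 0 ∧ κ₃ = 0 := by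
  simp only [div_eq_zero_iff, pow_eq_zero_iff four_ne_zero, hN, or_false]
  constructor
  · rintro ⟨h₂, h₁, rfl⟩
    obtain rfl : κ₂ = 0 := by simpa [hN] using h₂
    simpa [hN] using h₁
  · rintro ⟨rfl, rfl, rfl⟩
    simp

/-- Corollary 2.6: center conditions for `dr/dθ = r (P₁ r + P₄ r⁴)`. -/
theorem quintic_center_conditions
    (p10 p01 p40 p31 p22 p13 p04 : ℝ) (h : p10 ^ 2 + p01 ^ 2 ≠ 0)
    (P1 P4 : ℝ → ℝ)
    (hP1 : ∀ θ, P1 θ = p10 * Real.cos θ + p01 * Real.sin θ)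
    (hP4 : ∀ θ, P4 θ = p40 * Real.cos θ ^ 4 + p31 * Real.cos θ ^ 3 * Real.sin θ +
      p22 * Real.cos θ ^ 2 * Real.sin θ ^ 2 + p13 * Real.cos θ * Real.sin θ ^ 3 +
      p04 * Real.sin θ ^ 4) :
    HasCenterAtZero (fun θ r => r * (P1 θ * r + P4 θ * r ^ 4)) ↔
      (3 * (p40 + p04) + p22 = 0 ∧
       (p10 ^ 2 - p01 ^ 2) * (p04 - p40) = p10 * p01 * (p31 + p13) ∧
       p40 * p01 ^ 4 - p31 * p01 ^ 3 * p10 + p22 * p01 ^ 2 * p10 ^ 2 -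
         p13 * p01 * p10 ^ 3 + p04 * p10 ^ 4 = 0) := by
  obtain ⟨u, v, hquartic⟩ := exists_quartic_eq_even_add_odd h p40 p31 p22 p13 p04 rfl rfl rfl rfl
  have hP4_eq := funext fun θ => (hP4 θ).trans (hquartic (cos θ) (sin θ) (P1 θ)
    (trigLinear (-p01) p10 θ) (hP1 θ) rfl)
  change HasCenterAtZero (abelField P1 P4 2) ↔ _
  rw [hP4_eq, hasCenterAtZero_abelField_trigLinear_iff h (funext hP1) rfl,
    even_coeffs_eq_zero_iff h, sub_eq_zero]
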